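/- arXiv:2502.13529 — 2 statements merged into one kernel-verified Lean document; each statement's English description precedes it below -/
import Mathlib

section
/- Let f be a Holland map in Hol(γ,ρ) with γ < 1 and p = 1/γ, so that the Lebesgue measure of J_n satisfies λ(J_n) = O(n^{−p−1} s(n)) with s slowly varying at infinity. Then the operators Λ_n act boundedly on BV and their operator norms satisfy ‖Λ_n‖_{L(BV)} = O(n^{−p−1} s(n)). -/
open MeasureTheory Filter Set Topology

def SlowlyVarying (s : ℝ → ℝ) : Prop :=
  ∀ l : ℝ, 0 < l → Tendsto (fun x => s (l * x) / s x) atTop (nhds 1)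

structure IsHolland (γ : ℝ) (ρ : ℝ → ℝ) (f : ℝ → ℝ) : Prop where
  gamma_pos : 0 < γ
  rho_pos : ∀ x ∈ Set.Ioo (0:ℝ) 1, 0 < ρ x
  maps_to : ∀ x ∈ Set.Icc (0:ℝ) 1, f x ∈ Set.Icc (0:ℝ) 1
  eq_left : ∀ x ∈ Set.Icc (0:ℝ) (1/2), f x = x * (1 + x ^ γ * ρ x)
  eq_right : ∀ x ∈ Set.Ioc (1/2:ℝ) 1, f x = 2 * x - 1
  smooth : ContDiffOn ℝ 2 ρ (Set.Ioo 0 1)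
  slowly_zero : ∀ l : ℝ, 0 < l →
    Tendsto (fun x => ρ (l * x) / ρ x) (nhdsWithin 0 (Set.Ioi 0)) (nhds 1)
  deriv_small : Tendsto (fun x => x * deriv ρ x / ρ x) (nhdsWithin 0 (Set.Ioi 0)) (nhds 0)
  deriv2_small : Tendsto (fun x => x ^ 2 * deriv (deriv ρ) x / ρ x)
    (nhdsWithin 0 (Set.Ioi 0)) (nhds 0)
  rho_zero : Tendsto ρ (nhdsWithin 0 (Set.Ioi 0)) (nhds 0)
  half : f (1/2) = 1
  expanding : ∀ x ∈ Set.Ioo (0:ℝ) 1, x ≠ 1/2 → 1 < deriv f x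

noncomputable def RY (f : ℝ → ℝ) (x : ℝ) : ℕ :=
  sInf {n : ℕ | 1 ≤ n ∧ f^[n] x ∈ Set.Ioc (1/2:ℝ) 1}

noncomputable def Kop (h v0 v1 : ℝ → ℝ) (φ : ℝ → ℝ) : ℝ → ℝ := fun x =>
  (1 / h x) * (h (v0 x) * |deriv v0 x| * φ (v0 x) + h (v1 x) * |deriv v1 x| * φ (v1 x))

noncomputable def Aop (h v0 v1 : ℝ → ℝ) (n : ℕ) (φ : ℝ → ℝ) : ℝ → ℝ :=
  Set.indicator (Set.Icc (0:ℝ) (1/2)) (fun y =>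
    h (v1 (v0^[n-1] y)) * |deriv (fun w => v1 (v0^[n-1] w)) y| / h y * φ (v1 (v0^[n-1] y)))

noncomputable def Bop (h v0 : ℝ → ℝ) (n : ℕ) (φ : ℝ → ℝ) : ℝ → ℝ :=
  Set.indicator (Set.Ioc (1/2:ℝ) 1) (fun y =>
    h (v0^[n] y) * |deriv (v0^[n]) y| / h y * φ (v0^[n] y))

noncomputable def Cop (h v0 : ℝ → ℝ) (n : ℕ) (φ : ℝ → ℝ) : ℝ → ℝ :=
  Set.indicator (Set.Icc (0:ℝ) (1/2)) (fun y =>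
    h (v0^[n] y) * |deriv (v0^[n]) y| / h y * φ (v0^[n] y))

noncomputable def Lop (h v0 v1 : ℝ → ℝ) (n : ℕ) (φ : ℝ → ℝ) : ℝ → ℝ :=
  Set.indicator (Set.Ioc (1/2:ℝ) 1) (fun y =>
    h (v1 (v0^[n-1] y)) * |deriv (fun w => v1 (v0^[n-1] w)) y| / h y * φ (v1 (v0^[n-1] y)))

noncomputable def LopC (h v0 v1 : ℝ → ℝ) (n : ℕ) (φ : ℝ → ℂ) : ℝ → ℂ :=
  Set.indicator (Set.Ioc (1/2:ℝ) 1) (fun y =>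
    ((h (v1 (v0^[n-1] y)) * |deriv (fun w => v1 (v0^[n-1] w)) y| / h y : ℝ) : ℂ)
      * φ (v1 (v0^[n-1] y)))

noncomputable def nestedK (K : (ℝ → ℝ) → (ℝ → ℝ)) :
    (j : ℕ) → (Fin j → ℕ) → (Fin j → (ℝ → ℝ)) → (ℝ → ℝ)
  | 0, _, _ => fun _ => 1
  | j + 1, ns, φs =>
      K^[ns 0] (fun y => φs 0 y * nestedK K j (fun i => ns i.succ) (fun i => φs i.succ) y)

open scoped ENNReal NNReal

/-!
Up to the invariant density, which has bounded variation and is bounded below on `[1/2, 1]`, the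
weight of `Λ_{k+1}` is half the derivative of `v₀ᵏ`. On `(0, 1/2)` one has `f''(x) = O(x^(γ-1))`,
so `log f'` has finite variation there. The images of the fundamental domain `[1/2, 1)` under the
iterates of `v₀` follow each other from right to left, so the variation over `[1/2, 1)` of
`log (v₀ᵏ)'`, a Birkhoff sum of `-log f' ∘ v₀`, is bounded by that of `log f'`, uniformly in `k`.
This bounded distortion makes both the supremum and the variation of `(v₀ᵏ)'` at most a constant
times the length of `J_{k+1}`, and `BV` is a Banach algebra.
-/

section Variation

variable {α E : Type*} [LinearOrder α]

lemma eVariationOn_union_le [PseudoEMetricSpace E] {f : α → E} {s t : Set α} {J : ℝ≥0∞}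
    (hst : ∀ x ∈ s, ∀ y ∈ t, x ≤ y) (hJ : ∀ x ∈ s, ∀ y ∈ t, edist (f x) (f y) ≤ J) :
    eVariationOn f (s ∪ t) ≤ eVariationOn f s + J + eVariationOn f t := by
  refine iSup_le fun ⟨n, u, hu, hust⟩ ↦ ?_
  have hA : (u '' Iic n).Finite := (finite_Iic n).image u
  have hAst : u '' Iic n = u '' Iic n ∩ s ∪ u '' Iic n ∩ t := by
    rw [← inter_union_distrib_left]
    exact (inter_eq_left.2 (image_subset_iff.2 fun i _ ↦ hust i)).symm
  simp_rw [edist_comm (f (u (_ + 1))), ← eVariationOn.image_range_of_monotone f hu]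
  rcases (u '' Iic n ∩ s).eq_empty_or_nonempty with hs | hs
  · rw [hAst, hs, empty_union]
    exact (eVariationOn.mono f inter_subset_right).trans le_add_self
  rcases (u '' Iic n ∩ t).eq_empty_or_nonempty with ht | ht
  · rw [hAst, ht, union_empty, add_assoc]
    exact (eVariationOn.mono f inter_subset_right).trans le_self_add
  obtain ⟨x, hx⟩ := (hA.inter_of_left s).exists_maximal hs
  obtain ⟨y, hy⟩ := (hA.inter_of_left t).exists_minimal ht
  rw [maximal_iff_isGreatest] at hx
  rw [minimal_iff_isLeast] at hy
  rw [hAst, eVariationOn.union' f hx hy (hst x hx.1.2 y hy.1.2)]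
  gcongr
  · exact eVariationOn.mono f inter_subset_right
  · exact hJ x hx.1.2 y hy.1.2
  · exact eVariationOn.mono f inter_subset_right

lemma sum_eVariationOn_le_biUnion [PseudoEMetricSpace E] (f : α → E) {s : ℕ → Set α}
    (hs : ∀ i j, i < j → ∀ x ∈ s j, ∀ y ∈ s i, x ≤ y) (k : ℕ) :
    ∑ j ∈ Finset.range k, eVariationOn f (s j) ≤ eVariationOn f (⋃ j ∈ Finset.range k, s j) := by
  induction k with
  | zero => simp
  | succ k ih =>
    rw [Finset.sum_range_succ, Finset.range_add_one, Finset.set_biUnion_insert, add_comm]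
    refine (add_le_add_right ih _).trans (eVariationOn.add_le_union f fun x hx y hy ↦ ?_)
    obtain ⟨j, hj, hyj⟩ := mem_iUnion₂.1 hy
    exact hs j k (Finset.mem_range.1 hj) x hx y hyj

lemma eVariationOn_sum_le [NormedAddCommGroup E] {ι : Type*} (t : Finset ι) (f : ι → α → E)
    (s : Set α) :
    eVariationOn (fun x ↦ ∑ i ∈ t, f i x) s ≤ ∑ i ∈ t, eVariationOn (f i) s := by
  refine iSup_le fun ⟨n, u, hu, hus⟩ ↦ ?_
  calc ∑ j ∈ Finset.range n, edist (∑ i ∈ t, f i (u (j + 1))) (∑ i ∈ t, f i (u j))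
      ≤ ∑ j ∈ Finset.range n, ∑ i ∈ t, edist (f i (u (j + 1))) (f i (u j)) := by
        gcongr with j
        simp only [edist_eq_enorm_sub, ← Finset.sum_sub_distrib]
        exact enorm_sum_le t fun i ↦ f i (u (j + 1)) - f i (u j)
    _ = ∑ i ∈ t, ∑ j ∈ Finset.range n, edist (f i (u (j + 1))) (f i (u j)) := Finset.sum_comm
    _ ≤ ∑ i ∈ t, eVariationOn (f i) s := by
        gcongr with i
        exact eVariationOn.sum_le hu hus

end Variation

section BirkhoffSum

variable {α E : Type*} [LinearOrder α] {v : α → α} {U S : Set α}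

lemma monotoneOn_iterate (hv : MonotoneOn v U) (hvU : MapsTo v U U) (k : ℕ) :
    MonotoneOn v^[k] U := by
  induction k with
  | zero => exact monotoneOn_id
  | succ k ih => exact ih.comp hv hvU

lemma iterate_le_iterate_of_lt (hv : MonotoneOn v U) (hvU : MapsTo v U U) (hSU : S ⊆ U)
    (hS : ∀ x ∈ S, ∀ y ∈ S, v x ≤ y) {i j : ℕ} (hij : i < j) {x y : α} (hx : x ∈ S)
    (hy : y ∈ S) : v^[j] x ≤ v^[i] y := by
  have step (k : ℕ) {a b : α} (ha : a ∈ S) (hb : b ∈ S) : v^[k + 1] a ≤ v^[k] b :=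
    monotoneOn_iterate hv hvU k (hvU (hSU ha)) (hSU hb) (hS a ha b hb)
  induction j, hij using Nat.le_induction with
  | base => exact step i hx hy
  | succ j _ ih => exact (step j hx hx).trans ih

lemma eVariationOn_birkhoffSum_le [NormedAddCommGroup E] (g : α → E) (hv : MonotoneOn v U)
    (hvU : MapsTo v U U) (hSU : S ⊆ U) (hS : ∀ x ∈ S, ∀ y ∈ S, v x ≤ y) (k : ℕ) :
    eVariationOn (birkhoffSum v g k) S ≤ eVariationOn g U := by
  calc eVariationOn (birkhoffSum v g k) S
      ≤ ∑ j ∈ Finset.range k, eVariationOn (g ∘ v^[j]) S := eVariationOn_sum_le _ _ _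
    _ = ∑ j ∈ Finset.range k, eVariationOn g (v^[j] '' S) := by
        congr! 1 with j
        exact eVariationOn.comp_eq_of_monotoneOn g _ ((monotoneOn_iterate hv hvU j).mono hSU)
    _ ≤ eVariationOn g (⋃ j ∈ Finset.range k, v^[j] '' S) := by
        refine sum_eVariationOn_le_biUnion g (fun i j hij ↦ ?_) k
        rintro _ ⟨x, hx, rfl⟩ _ ⟨y, hy, rfl⟩
        exact iterate_le_iterate_of_lt hv hvU hSU hS hij hx hy
    _ ≤ eVariationOn g U := eVariationOn.mono g <|
        iUnion₂_subset fun j _ ↦ ((hvU.iterate j).mono_left hSU).image_subset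

end BirkhoffSum

section Distortion

variable {v g : ℝ → ℝ} {U S : Set ℝ}

lemma hasDerivAt_iterate_exp_birkhoffSum (hvU : MapsTo v U U)
    (hvg : ∀ x ∈ U, HasDerivAt v (Real.exp (g x)) x) (k : ℕ) {x : ℝ} (hx : x ∈ U) :
    HasDerivAt v^[k] (Real.exp (birkhoffSum v g k x)) x := by
  induction k with
  | zero => simpa using hasDerivAt_id x
  | succ k ih =>
    rw [birkhoffSum_succ, add_comm (birkhoffSum v g k x), Real.exp_add, Function.iterate_succ']
    exact (hvg _ (hvU.iterate k hx)).comp x ih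

lemma exp_birkhoffSum_le (hv : MonotoneOn v U) (hvU : MapsTo v U U)
    (hvg : ∀ x ∈ U, HasDerivAt v (Real.exp (g x)) x) (hg : BoundedVariationOn g U) {p : ℝ}
    (hvp : v p < p) (hpU : Icc (v p) p ⊆ U) (hSU : S ⊆ U) (hpS : p ∈ S)
    (hS : ∀ x ∈ S, ∀ y ∈ S, v x ≤ y) (k : ℕ) {x : ℝ} (hx : x ∈ S) :
    Real.exp (birkhoffSum v g k x) ≤
      Real.exp (2 * (eVariationOn g U).toReal) / (p - v p) * (v^[k] p - v^[k + 1] p) := by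
  set D := (eVariationOn g U).toReal
  have hosc {T : Set ℝ} (hTU : T ⊆ U) (hT : ∀ x ∈ T, ∀ y ∈ T, v x ≤ y) {a b : ℝ} (ha : a ∈ T)
      (hb : b ∈ T) : birkhoffSum v g k a ≤ birkhoffSum v g k b + D := by
    have hvar := eVariationOn_birkhoffSum_le g hv hvU hTU hT k
    have hTbv : BoundedVariationOn (birkhoffSum v g k) T := ne_top_of_le_ne_top hg hvar
    have := (hTbv.sub_le ha hb).trans (ENNReal.toReal_mono hg hvar)
    linarith
  have hJ : ∀ a ∈ Icc (v p) p, ∀ b ∈ Icc (v p) p, v a ≤ b := fun a ha b hb ↦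
    (hv (hpU ha) (hSU hpS) ha.2).trans hb.1
  have hderiv (ξ) (hξ : ξ ∈ Icc (v p) p) :=
    hasDerivAt_iterate_exp_birkhoffSum hvU hvg k (hpU hξ)
  obtain ⟨ξ, hξ, hslope⟩ := exists_hasDerivAt_eq_slope v^[k] _ hvp
    (fun ξ hξ ↦ (hderiv ξ hξ).continuousAt.continuousWithinAt)
    fun ξ hξ ↦ hderiv ξ (Ioo_subset_Icc_self hξ)
  have hxξ : birkhoffSum v g k x ≤ 2 * D + birkhoffSum v g k ξ := by
    linarith [hosc hSU hS hx hpS,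
      hosc hpU hJ (right_mem_Icc.2 hvp.le) (Ioo_subset_Icc_self hξ)]
  calc Real.exp (birkhoffSum v g k x)
      ≤ Real.exp (2 * D) * Real.exp (birkhoffSum v g k ξ) := by
        rw [← Real.exp_add]
        exact Real.exp_le_exp.2 hxξ
    _ = _ := by rw [hslope, ← Function.iterate_succ_apply]; ring

end Distortion

section BVNorm

variable {α β E : Type*} [LinearOrder α]

/-- The `BV` norm of `f` on `s`: supremum plus total variation. Unlike the total variation alone it
is submultiplicative; on functions vanishing somewhere the two are equivalent. -/
noncomputable def bvNorm [NormedAddCommGroup E] (f : α → E) (s : Set α) : ℝ≥0∞ :=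
  (⨆ x ∈ s, ‖f x‖ₑ) + eVariationOn f s

lemma enorm_le_bvNorm [NormedAddCommGroup E] (f : α → E) {s : Set α} {x : α} (hx : x ∈ s) :
    ‖f x‖ₑ ≤ bvNorm f s :=
  (le_iSup₂ (f := fun x _ ↦ ‖f x‖ₑ) x hx).trans le_self_add

lemma bvNorm_congr [NormedAddCommGroup E] {f g : α → E} {s : Set α} (hfg : EqOn f g s) :
    bvNorm f s = bvNorm g s := by
  unfold bvNorm
  rw [eVariationOn.congr hfg]
  congr 1
  exact biSup_congr fun x hx ↦ by rw [hfg hx]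

lemma bvNorm_le_of_enorm_le [NormedAddCommGroup E] {f : α → E} {s : Set α} {A V : ℝ≥0∞}
    (hA : ∀ x ∈ s, ‖f x‖ₑ ≤ A) (hV : eVariationOn f s ≤ V) : bvNorm f s ≤ A + V :=
  add_le_add (iSup₂_le hA) hV

lemma bvNorm_eq_zero [NormedAddCommGroup E] {f : α → E} {s : Set α} (hf : ∀ x ∈ s, f x = 0) :
    bvNorm f s = 0 := by
  rw [bvNorm_congr (g := fun _ ↦ 0) hf]
  simp [bvNorm, eVariationOn]

lemma bvNorm_singleton [NormedAddCommGroup E] (f : α → E) (x : α) : bvNorm f {x} = ‖f x‖ₑ := by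
  simp [bvNorm, eVariationOn.subsingleton]

lemma bvNorm_union_le [NormedAddCommGroup E] (f : α → E) {s t : Set α}
    (hst : ∀ x ∈ s, ∀ y ∈ t, x ≤ y) :
    bvNorm f (s ∪ t) ≤ 2 * (bvNorm f s + bvNorm f t) := by
  set A := ⨆ x ∈ s, ‖f x‖ₑ with hA
  set B := ⨆ x ∈ t, ‖f x‖ₑ with hB
  have hfA : ∀ x ∈ s, ‖f x‖ₑ ≤ A := fun x hx ↦ le_iSup₂ (f := fun x _ ↦ ‖f x‖ₑ) x hx
  have hfB : ∀ x ∈ t, ‖f x‖ₑ ≤ B := fun x hx ↦ le_iSup₂ (f := fun x _ ↦ ‖f x‖ₑ) x hx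
  have hsup : ∀ x ∈ s ∪ t, ‖f x‖ₑ ≤ A + B := by
    rintro x (hx | hx)
    exacts [(hfA x hx).trans le_self_add, (hfB x hx).trans le_add_self]
  have hvar : eVariationOn f (s ∪ t) ≤ eVariationOn f s + (A + B) + eVariationOn f t := by
    refine eVariationOn_union_le hst fun x hx y hy ↦ ?_
    rw [edist_eq_enorm_sub]
    exact enorm_sub_le.trans (add_le_add (hfA x hx) (hfB y hy))
  calc bvNorm f (s ∪ t)
      ≤ A + B + (eVariationOn f s + (A + B) + eVariationOn f t) :=
        bvNorm_le_of_enorm_le hsup hvar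
    _ ≤ A + B + (eVariationOn f s + (A + B) + eVariationOn f t)
          + (eVariationOn f s + eVariationOn f t) := le_self_add
    _ = 2 * (bvNorm f s + bvNorm f t) := by unfold bvNorm; rw [← hA, ← hB]; ring

lemma bvNorm_mul_le (f g : α → ℝ) (s : Set α) :
    bvNorm (fun x ↦ f x * g x) s ≤ bvNorm f s * bvNorm g s := by
  set A := ⨆ x ∈ s, ‖f x‖ₑ with hA
  set B := ⨆ x ∈ s, ‖g x‖ₑ with hB
  have hfA : ∀ x ∈ s, ‖f x‖ₑ ≤ A := fun x hx ↦ le_iSup₂ (f := fun x _ ↦ ‖f x‖ₑ) x hx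
  have hgB : ∀ x ∈ s, ‖g x‖ₑ ≤ B := fun x hx ↦ le_iSup₂ (f := fun x _ ↦ ‖g x‖ₑ) x hx
  calc bvNorm (fun x ↦ f x * g x) s
      ≤ A * B + (A * eVariationOn g s + B * eVariationOn f s) :=
        bvNorm_le_of_enorm_le
          (fun x hx ↦ by rw [enorm_mul]; exact mul_le_mul' (hfA x hx) (hgB x hx))
          (eVariationOn_fun_mul_le hfA hgB)
    _ ≤ A * B + (A * eVariationOn g s + B * eVariationOn f s)
          + eVariationOn f s * eVariationOn g s := le_self_add
    _ = bvNorm f s * bvNorm g s := by unfold bvNorm; rw [← hA, ← hB]; ring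

lemma bvNorm_comp_le [LinearOrder β] [NormedAddCommGroup E] (f : β → E) {w : α → β}
    {s : Set α} {t : Set β} (hw : MonotoneOn w s) (hst : MapsTo w s t) :
    bvNorm (fun x ↦ f (w x)) s ≤ bvNorm f t :=
  add_le_add (iSup₂_le fun x hx ↦ le_iSup₂ (f := fun y _ ↦ ‖f y‖ₑ) (w x) (hst hx))
    (eVariationOn.comp_le_of_monotoneOn f w hw hst)

lemma bvNorm_mono [NormedAddCommGroup E] (f : α → E) {s t : Set α} (hst : s ⊆ t) :
    bvNorm f s ≤ bvNorm f t :=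
  bvNorm_comp_le f monotoneOn_id hst

lemma bvNorm_ne_top [NormedAddCommGroup E] {f : α → E} {s : Set α}
    (hf : BoundedVariationOn f s) : bvNorm f s ≠ ∞ := by
  rcases s.eq_empty_or_nonempty with rfl | ⟨x₀, hx₀⟩
  · simp [bvNorm]
  have hsup : ∀ x ∈ s, ‖f x‖ₑ ≤ ‖f x₀‖ₑ + eVariationOn f s := fun x hx ↦ by
    grw [← eVariationOn.edist_le f hx hx₀, edist_eq_enorm_sub, ← enorm_add_le, add_sub_cancel]
  exact ne_top_of_le_ne_top (by finiteness [hf]) (bvNorm_le_of_enorm_le hsup le_rfl)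

lemma bvNorm_univ_le_two_mul_eVariationOn [NormedAddCommGroup E] {f : α → E} {x₀ : α}
    (hf : f x₀ = 0) : bvNorm f univ ≤ 2 * eVariationOn f univ := by
  rw [two_mul]
  refine bvNorm_le_of_enorm_le (fun x _ ↦ ?_) le_rfl
  simpa [edist_eq_enorm_sub, hf] using eVariationOn.edist_le f (mem_univ x) (mem_univ x₀)

lemma bvNorm_const_le [NormedAddCommGroup E] (c : E) (s : Set α) :
    bvNorm (fun _ ↦ c) s ≤ ‖c‖ₑ := by
  refine (bvNorm_le_of_enorm_le (A := ‖c‖ₑ) (V := 0) (fun _ _ ↦ le_rfl) ?_).trans_eq (add_zero _)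
  simp [eVariationOn]

lemma bvNorm_abs_le (f : α → ℝ) (s : Set α) : bvNorm (fun x ↦ |f x|) s ≤ bvNorm f s := by
  have hlip : LipschitzOnWith 1 (norm : ℝ → ℝ) univ := lipschitzWith_one_norm.lipschitzOnWith
  refine add_le_add (by simp) ?_
  simpa using! hlip.comp_eVariationOn_le (mapsTo_univ f s)

lemma bvNorm_exp_le {f : α → ℝ} {s : Set α} {M : ℝ} (hM : ∀ x ∈ s, Real.exp (f x) ≤ M) :
    bvNorm (fun x ↦ Real.exp (f x)) s ≤ ENNReal.ofReal M * (1 + eVariationOn f s) := by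
  have hlip : LipschitzOnWith M.toNNReal Real.exp {y | Real.exp y ≤ M} := by
    have hconv : Convex ℝ {y | Real.exp y ≤ M} := by
      simpa using convexOn_exp.convex_le M
    refine hconv.lipschitzOnWith_of_nnnorm_deriv_le (fun y _ ↦ Real.differentiableAt_exp) ?_
    intro y hy
    rw [Real.deriv_exp, Real.nnnorm_of_nonneg (Real.exp_nonneg y)]
    exact NNReal.le_toNNReal_of_coe_le hy
  rw [mul_add, mul_one]
  refine bvNorm_le_of_enorm_le (fun x hx ↦ ?_) (hlip.comp_eVariationOn_le hM)
  rw [Real.enorm_of_nonneg (Real.exp_nonneg _)]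
  exact ENNReal.ofReal_le_ofReal (hM x hx)

lemma bvNorm_inv_ne_top {f : α → ℝ} {s : Set α} {m : ℝ} (hm : 0 < m) (hfm : ∀ x ∈ s, m ≤ f x)
    (hf : BoundedVariationOn f s) : bvNorm (fun x ↦ (f x)⁻¹) s ≠ ∞ := by
  have hlip : LipschitzOnWith (m⁻¹ ^ 2).toNNReal (fun y : ℝ ↦ y⁻¹) (Ici m) := by
    refine (convex_Ici m).lipschitzOnWith_of_nnnorm_deriv_le
      (fun y hy ↦ differentiableAt_inv (hm.trans_le hy).ne') fun y hy ↦ ?_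
    rw [← NNReal.coe_le_coe, Real.coe_toNNReal _ (by positivity)]
    simp only [deriv_inv, coe_nnnorm, norm_neg, norm_inv, norm_pow, inv_pow, Real.norm_eq_abs,
      sq_abs]
    have : m ≤ y := hy
    gcongr
  exact bvNorm_ne_top (hlip.comp_boundedVariationOn hfm hf)

lemma bvNorm_indicator_Ioc_le [NormedAddCommGroup E] (f : α → E) {a b : α} (hab : a < b) :
    bvNorm ((Ioc a b).indicator f) univ ≤ 8 * (bvNorm f (Ioo a b) + ‖f b‖ₑ) := by
  set F := (Ioc a b).indicator f
  have hF : EqOn F f (Ioc a b) := eqOn_indicator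
  have hFa : bvNorm F (Iic a) = 0 :=
    bvNorm_eq_zero fun x hx ↦ indicator_of_notMem (fun h ↦ h.1.not_ge hx) f
  have hFb : bvNorm F (Ioi b) = 0 :=
    bvNorm_eq_zero fun x hx ↦ indicator_of_notMem (fun h ↦ h.2.not_gt hx) f
  have hIci : bvNorm F (Ici b) ≤ 2 * ‖f b‖ₑ := by
    rw [← Ioi_union_left, union_comm]
    grw [bvNorm_union_le F fun x hx y hy ↦ hx.trans_le hy.le, hFb, bvNorm_singleton, add_zero,
      hF ⟨hab, le_rfl⟩]
  calc bvNorm F univ ≤ 2 * (bvNorm F (Iic a) + bvNorm F (Ioi a)) := by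
        rw [← Iic_union_Ioi (a := a)]
        exact bvNorm_union_le F fun x hx y hy ↦ hx.trans (mem_Ioi.1 hy).le
    _ ≤ 2 * (0 + 2 * (bvNorm F (Ioo a b) + bvNorm F (Ici b))) := by
        rw [hFa, ← Ioo_union_Ici_eq_Ioi hab]
        gcongr
        exact bvNorm_union_le F fun x hx y hy ↦ hx.2.le.trans hy
    _ ≤ 2 * (0 + 2 * (2 * bvNorm f (Ioo a b) + 2 * ‖f b‖ₑ)) := by
        rw [bvNorm_congr (hF.mono Ioo_subset_Ioc_self)]
        gcongr
        exact le_mul_of_one_le_left' one_le_two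
    _ = 8 * (bvNorm f (Ioo a b) + ‖f b‖ₑ) := by ring

end BVNorm

section Calculus

variable {E : Type*} [NormedAddCommGroup E]

lemma exists_norm_le_of_tendsto_nhdsGT {q : ℝ → E} {a c : ℝ} {l : E}
    (hq : ContinuousOn q (Ioc a c)) (hlim : Tendsto q (𝓝[>] a) (𝓝 l)) :
    ∃ B, ∀ x ∈ Ioc a c, ‖q x‖ ≤ B := by
  obtain ⟨d, hd, hnear⟩ := mem_nhdsGT_iff_exists_Ioo_subset.1
    (hlim.norm.eventually_lt_const (lt_add_one ‖l‖))
  obtain ⟨B, hB⟩ := isCompact_Icc.exists_bound_of_continuousOn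
    (hq.mono (Icc_subset_Ioc hd le_rfl : Icc d c ⊆ Ioc a c))
  refine ⟨max B (‖l‖ + 1), fun x hx ↦ ?_⟩
  rcases lt_or_ge x d with hxd | hdx
  · exact le_max_of_le_right (hnear ⟨hx.1, hxd⟩).le
  · exact le_max_of_le_left (hB x ⟨hdx, hx.2⟩)

-- `deriv w b` is two-sided: either `w` is not differentiable at `b` and it is the junk value `0`,
-- or it is the limit of difference quotients from the left.
lemma enorm_deriv_right_le {w : ℝ → ℝ} {a b : ℝ} {M : ℝ≥0∞} (hab : a < b)
    (hw : DifferentiableOn ℝ w (Ioo a b)) (hM : ∀ x ∈ Ioo a b, ‖deriv w x‖ₑ ≤ M) :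
    ‖deriv w b‖ₑ ≤ M := by
  by_cases hb : DifferentiableAt ℝ w b
  swap
  · simp [deriv_zero_of_not_differentiableAt hb]
  have hslope : Tendsto (slope w b) (𝓝[<] b) (𝓝 (deriv w b)) :=
    hb.hasDerivAt.tendsto_slope.mono_left (nhdsWithin_mono b fun x hx ↦ hx.ne)
  refine le_of_tendsto hslope.enorm ?_
  filter_upwards [Ioo_mem_nhdsLT hab] with x hx
  have hcont : ContinuousOn w (Icc x b) := fun y hy ↦ by
    rcases hy.2.eq_or_lt with rfl | hyb
    · exact hb.continuousAt.continuousWithinAt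
    · have hy' : y ∈ Ioo a b := ⟨hx.1.trans_le hy.1, hyb⟩
      exact (hw.continuousOn.continuousAt (isOpen_Ioo.mem_nhds hy')).continuousWithinAt
  obtain ⟨c, hc, hcx⟩ := exists_deriv_eq_slope w hx.2 hcont
    (hw.mono (Ioo_subset_Ioo_left hx.1.le))
  rw [slope_comm, slope_def_field, ← hcx]
  exact hM c ⟨hx.1.trans hc.1, hc.2⟩

lemma eVariationOn_le_of_norm_deriv_le [NormedSpace ℝ E] {g g' : ℝ → E} {Φ Φ' : ℝ → ℝ} {s : Set ℝ}
    (hs : s.OrdConnected) (hg : ∀ x ∈ s, HasDerivAt g (g' x) x)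
    (hΦ : ∀ x ∈ s, HasDerivAt Φ (Φ' x) x) (hle : ∀ x ∈ s, ‖g' x‖ ≤ Φ' x) :
    eVariationOn g s ≤ eVariationOn Φ s := by
  have hinc {x y : ℝ} (hx : x ∈ s) (hy : y ∈ s) (hxy : x ≤ y) : ‖g y - g x‖ ≤ Φ y - Φ x := by
    have hsub : Icc x y ⊆ s := hs.out hx hy
    have hsub' : Ico x y ⊆ s := Ico_subset_Icc_self.trans hsub
    refine image_norm_le_of_norm_deriv_right_le_deriv_boundary' (f := fun t ↦ g t - g x)
      (B := fun t ↦ Φ t - Φ x) (a := x) (b := y)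
      (fun t ht ↦ ((hg t (hsub ht)).sub_const _).continuousAt.continuousWithinAt)
      (fun t ht ↦ ((hg t (hsub' ht)).sub_const _).hasDerivWithinAt) (by simp)
      (fun t ht ↦ ((hΦ t (hsub ht)).sub_const _).continuousAt.continuousWithinAt)
      (fun t ht ↦ ((hΦ t (hsub' ht)).sub_const _).hasDerivWithinAt)
      (fun t ht ↦ hle t (hsub' ht)) (right_mem_Icc.2 hxy)
  refine iSup_le fun ⟨n, u, hu, hus⟩ ↦ ?_
  refine (Finset.sum_le_sum fun i _ ↦ ?_).trans (eVariationOn.sum_le (n := n) hu hus)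
  rw [edist_dist, edist_dist, dist_eq_norm, Real.dist_eq]
  exact ENNReal.ofReal_le_ofReal <|
    (hinc (hus i) (hus (i + 1)) (hu i.le_succ)).trans (le_abs_self _)

end Calculus

section InverseBranch

/-- `v` is an inverse branch of `f` on `U` with values in `I`. -/
structure IsInverseBranch (f v : ℝ → ℝ) (U I : Set ℝ) : Prop where
  mapsTo : MapsTo v U I
  rightInvOn : RightInvOn v f U

namespace IsInverseBranch

variable {f v : ℝ → ℝ} {U I : Set ℝ}

lemma strictMonoOn (hv : IsInverseBranch f v U I) (hf : StrictMonoOn f I) : StrictMonoOn v U :=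
  fun a ha b hb hab ↦ (hf.lt_iff_lt (hv.mapsTo ha) (hv.mapsTo hb)).1 <| by
    rwa [hv.rightInvOn ha, hv.rightInvOn hb]

lemma hasDerivAt (hv : IsInverseBranch f v U I) (hf : StrictMonoOn f I) {x f' : ℝ}
    (hU : U ∈ 𝓝 x) (hI : I ∈ 𝓝 (v x)) (hff' : HasDerivAt f f' (v x)) (hf' : f' ≠ 0) :
    HasDerivAt v f'⁻¹ x := by
  have hfvx : f (v x) = x := hv.rightInvOn (mem_of_mem_nhds hU)
  have himage : v '' U ∈ 𝓝 (v x) := by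
    filter_upwards [hI, hff'.continuousAt.preimage_mem_nhds (by rwa [hfvx])] with y hyI hyU
    exact ⟨f y, hyU, hf.injOn (hv.mapsTo hyU) hyI (hv.rightInvOn hyU)⟩
  refine HasDerivAt.of_local_left_inverse
    ((hv.strictMonoOn hf).continuousAt_of_image_mem_nhds hU himage) hff' hf' ?_
  filter_upwards [hU] with y hy using hv.rightInvOn hy

end IsInverseBranch

end InverseBranch

section WeightedComposition

variable {h w : ℝ → ℝ} {a b : ℝ}

lemma enorm_comp_mul_deriv_right_le (hab : a < b) (hw : DifferentiableOn ℝ w (Ioo a b))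
    (hwI : MapsTo w (Ioo a b) (Icc a b)) :
    ‖h (w b)‖ₑ * ‖deriv w b‖ₑ ≤ bvNorm h (Icc a b) * bvNorm (deriv w) (Ioo a b) := by
  by_cases hb : DifferentiableAt ℝ w b
  swap
  · simp [deriv_zero_of_not_differentiableAt hb]
  have hwb : w b ∈ Icc a b := by
    refine isClosed_Icc.mem_of_tendsto (hb.continuousAt.tendsto.mono_left
      (nhdsWithin_le_nhds (s := Iio b))) ?_
    filter_upwards [Ioo_mem_nhdsLT hab] with x hx using hwI hx
  exact mul_le_mul' (enorm_le_bvNorm h hwb)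
    (enorm_deriv_right_le hab hw fun x hx ↦ enorm_le_bvNorm (deriv w) hx)

lemma bvNorm_indicator_weighted_comp_le (h φ : ℝ → ℝ) (hab : a < b)
    (hwm : MonotoneOn w (Ioo a b)) (hw : DifferentiableOn ℝ w (Ioo a b))
    (hwI : MapsTo w (Ioo a b) (Icc a b)) :
    bvNorm ((Ioc a b).indicator fun y ↦ h (w y) * |deriv w y| / h y * φ (w y)) univ ≤
      16 * (bvNorm h (Icc a b) * bvNorm (deriv w) (Ioo a b) *
        bvNorm (fun y ↦ (h y)⁻¹) (Icc a b) * bvNorm φ univ) := by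
  simp only [div_eq_mul_inv]
  set R := bvNorm h (Icc a b) * bvNorm (deriv w) (Ioo a b) *
    bvNorm (fun y ↦ (h y)⁻¹) (Icc a b) * bvNorm φ univ
  have hinterior :
      bvNorm (fun y ↦ h (w y) * |deriv w y| * (h y)⁻¹ * φ (w y)) (Ioo a b) ≤ R := by
    grw [bvNorm_mul_le, bvNorm_mul_le, bvNorm_mul_le, bvNorm_abs_le, bvNorm_comp_le h hwm hwI,
      bvNorm_comp_le φ hwm (mapsTo_univ _ _), bvNorm_mono (fun y ↦ (h y)⁻¹) Ioo_subset_Icc_self]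
  have hright : ‖h (w b) * |deriv w b| * (h b)⁻¹ * φ (w b)‖ₑ ≤ R := by
    simp only [enorm_mul, Real.enorm_abs]
    grw [enorm_comp_mul_deriv_right_le hab hw hwI, enorm_le_bvNorm φ (mem_univ (w b)),
      enorm_le_bvNorm (fun y ↦ (h y)⁻¹) (right_mem_Icc.2 hab.le)]
  calc _ ≤ 8 * (R + R) := (bvNorm_indicator_Ioc_le _ hab).trans (by gcongr)
    _ = 16 * R := by ring

end WeightedComposition

namespace IsHolland

variable {γ : ℝ} {ρ f v0 v1 : ℝ → ℝ}

lemma hasDerivAt_rho (hf : IsHolland γ ρ f) {x : ℝ} (hx : x ∈ Ioo 0 1) :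
    HasDerivAt ρ (deriv ρ x) x :=
  ((hf.smooth.differentiableOn two_ne_zero).differentiableAt (isOpen_Ioo.mem_nhds hx)).hasDerivAt

lemma contDiffOn_deriv_rho (hf : IsHolland γ ρ f) : ContDiffOn ℝ 1 (deriv ρ) (Ioo 0 1) :=
  hf.smooth.deriv_of_isOpen isOpen_Ioo (by norm_num)

lemma hasDerivAt_deriv_rho (hf : IsHolland γ ρ f) {x : ℝ} (hx : x ∈ Ioo 0 1) :
    HasDerivAt (deriv ρ) (deriv (deriv ρ) x) x :=
  ((hf.contDiffOn_deriv_rho.differentiableOn one_ne_zero).differentiableAt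
    (isOpen_Ioo.mem_nhds hx)).hasDerivAt

lemma hasDerivAt_left (hf : IsHolland γ ρ f) {x : ℝ} (hx : x ∈ Ioo 0 (1 / 2)) :
    HasDerivAt f (1 + (1 + γ) * x ^ γ * ρ x + x ^ (γ + 1) * deriv ρ x) x := by
  have hx1 : x ∈ Ioo (0 : ℝ) 1 := ⟨hx.1, by linarith [hx.2]⟩
  have hpow : HasDerivAt (fun y : ℝ ↦ y ^ γ) (γ * x ^ (γ - 1)) x :=
    Real.hasDerivAt_rpow_const (Or.inl hx.1.ne')
  have h := (hasDerivAt_id x).fun_mul ((hpow.fun_mul (hf.hasDerivAt_rho hx1)).const_add 1)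
  refine (h.congr_of_eventuallyEq ?_).congr_deriv ?_
  · filter_upwards [Ioo_mem_nhds hx.1 hx.2] with y hy using hf.eq_left y ⟨hy.1.le, hy.2.le⟩
  · rw [Real.rpow_add_one hx.1.ne', Real.rpow_sub_one hx.1.ne', id]
    field_simp [hx.1.ne']
    ring

lemma hasDerivAt_deriv_left (hf : IsHolland γ ρ f) {x : ℝ} (hx : x ∈ Ioo 0 (1 / 2)) :
    HasDerivAt (deriv f) (x ^ (γ - 1) * ((1 + γ) * γ * ρ x + 2 * (1 + γ) * (x * deriv ρ x)
      + x ^ 2 * deriv (deriv ρ) x)) x := by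
  have hx1 : x ∈ Ioo (0 : ℝ) 1 := ⟨hx.1, by linarith [hx.2]⟩
  have hpow (β : ℝ) : HasDerivAt (fun y : ℝ ↦ y ^ β) (β * x ^ (β - 1)) x :=
    Real.hasDerivAt_rpow_const (Or.inl hx.1.ne')
  have h := (((hpow γ).const_mul (1 + γ)).fun_mul (hf.hasDerivAt_rho hx1)).const_add 1 |>.fun_add
    ((hpow (γ + 1)).fun_mul (hf.hasDerivAt_deriv_rho hx1))
  refine (h.congr_of_eventuallyEq ?_).congr_deriv ?_
  · filter_upwards [Ioo_mem_nhds hx.1 hx.2] with y hy using (hf.hasDerivAt_left hy).deriv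
  · rw [add_sub_cancel_right, Real.rpow_add_one hx.1.ne', Real.rpow_sub_one hx.1.ne']
    field_simp [hx.1.ne']
    ring

lemma one_lt_deriv (hf : IsHolland γ ρ f) {x : ℝ} (hx : x ∈ Ioo 0 (1 / 2)) : 1 < deriv f x :=
  hf.expanding x ⟨hx.1, by linarith [hx.2]⟩ hx.2.ne

lemma exists_abs_deriv_deriv_le (hf : IsHolland γ ρ f) :
    ∃ A, ∀ x ∈ Ioo (0 : ℝ) (1 / 2), |deriv (deriv f) x| ≤ A * x ^ (γ - 1) := by
  have hsub : Ioc (0 : ℝ) (1 / 2) ⊆ Ioo 0 1 := fun x hx ↦ ⟨hx.1, by linarith [hx.2]⟩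
  have hρ : ∀ᶠ x in 𝓝[>] 0, ρ x ≠ 0 := by
    filter_upwards [Ioo_mem_nhdsGT one_pos] with x hx using (hf.rho_pos x hx).ne'
  have hlim {q : ℝ → ℝ} (hq : Tendsto (fun x ↦ q x / ρ x) (𝓝[>] 0) (𝓝 0)) :
      Tendsto q (𝓝[>] 0) (𝓝 0) := by
    refine (zero_mul (0 : ℝ) ▸ hq.mul hf.rho_zero).congr' ?_
    filter_upwards [hρ] with x hx using div_mul_cancel₀ _ hx
  have hρ' := hf.contDiffOn_deriv_rho.continuousOn
  have hρ'' : ContinuousOn (deriv (deriv ρ)) (Ioo 0 1) :=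
    (hf.contDiffOn_deriv_rho.deriv_of_isOpen (m := 0) isOpen_Ioo (by norm_num)).continuousOn
  obtain ⟨B₀, hB₀⟩ := exists_norm_le_of_tendsto_nhdsGT (hf.smooth.continuousOn.mono hsub)
    hf.rho_zero
  obtain ⟨B₁, hB₁⟩ := exists_norm_le_of_tendsto_nhdsGT ((continuousOn_id.mul hρ').mono hsub)
    (hlim hf.deriv_small)
  obtain ⟨B₂, hB₂⟩ := exists_norm_le_of_tendsto_nhdsGT
    (((continuousOn_id.pow 2).mul hρ'').mono hsub) (hlim hf.deriv2_small)
  refine ⟨(1 + γ) * γ * B₀ + 2 * (1 + γ) * B₁ + B₂, fun x hx ↦ ?_⟩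
  have hx' : x ∈ Ioc (0 : ℝ) (1 / 2) := Ioo_subset_Ioc_self hx
  have hγ := hf.gamma_pos
  rw [(hf.hasDerivAt_deriv_left hx).deriv, abs_mul, mul_comm,
    abs_of_pos (Real.rpow_pos_of_pos hx.1 _)]
  gcongr
  · exact (Real.rpow_pos_of_pos hx.1 _).le
  refine (abs_add_three _ _ _).trans ?_
  gcongr
  · rw [abs_mul, abs_of_pos (by positivity)]
    gcongr
    exact hB₀ x hx'
  · rw [abs_mul, abs_of_pos (by positivity)]
    gcongr
    exact hB₁ x hx'
  · exact hB₂ x hx'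

lemma boundedVariationOn_log_deriv (hf : IsHolland γ ρ f) :
    BoundedVariationOn (fun x ↦ Real.log (deriv f x)) (Ioo 0 (1 / 2)) := by
  obtain ⟨A, hA⟩ := hf.exists_abs_deriv_deriv_le
  have hγ := hf.gamma_pos
  have hpow : BoundedVariationOn (fun x : ℝ ↦ x ^ γ) (Ioo 0 (1 / 2)) := by
    refine MonotoneOn.boundedVariationOn (C := 1) (fun x hx y _ hxy ↦ ?_) fun x hx ↦ ?_
    · exact Real.rpow_le_rpow hx.1.le hxy hγ.le
    · rw [abs_of_pos (Real.rpow_pos_of_pos hx.1 _)]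
      exact Real.rpow_le_one hx.1.le (by linarith [hx.2]) hγ.le
  have hΦ : BoundedVariationOn (fun x : ℝ ↦ A / γ * x ^ γ) (Ioo 0 (1 / 2)) := by
    exact (lipschitzWith_smul (A / γ)).comp_boundedVariationOn hpow
  refine ne_top_of_le_ne_top hΦ (eVariationOn_le_of_norm_deriv_le
    (g' := fun x ↦ deriv (deriv f) x / deriv f x) (Φ' := fun x ↦ A * x ^ (γ - 1)) ordConnected_Ioo
    (fun x hx ↦ ?_) (fun x hx ↦ ?_) fun x hx ↦ ?_)
  · exact (hf.hasDerivAt_deriv_left hx).differentiableAt.hasDerivAt.log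
      (one_pos.trans (hf.one_lt_deriv hx)).ne'
  · refine ((Real.hasDerivAt_rpow_const (Or.inl hx.1.ne')).const_mul (A / γ)).congr_deriv ?_
    field_simp
  · rw [norm_div, Real.norm_eq_abs]
    exact (div_le_self (abs_nonneg _) ((hf.one_lt_deriv hx).le.trans (le_abs_self _))).trans
      (hA x hx)

lemma strictMonoOn_left (hf : IsHolland γ ρ f) : StrictMonoOn f (Ioo 0 (1 / 2)) := by
  refine strictMonoOn_of_deriv_pos (convex_Ioo _ _)
    (fun x hx ↦ (hf.hasDerivAt_left hx).continuousAt.continuousWithinAt) fun x hx ↦ ?_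
  rw [interior_Ioo] at hx
  exact one_pos.trans (hf.one_lt_deriv hx)

lemma hasDerivAt_leftBranch (hf : IsHolland γ ρ f)
    (hv0 : IsInverseBranch f v0 (Ioo 0 1) (Ioo 0 (1 / 2))) {x : ℝ} (hx : x ∈ Ioo 0 1) :
    HasDerivAt v0 (Real.exp (-Real.log (deriv f (v0 x)))) x := by
  have hvx := hv0.mapsTo hx
  have hpos := one_pos.trans (hf.one_lt_deriv hvx)
  rw [Real.exp_neg, Real.exp_log hpos]
  exact hv0.hasDerivAt hf.strictMonoOn_left (isOpen_Ioo.mem_nhds hx) (isOpen_Ioo.mem_nhds hvx)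
    (hf.hasDerivAt_left hvx).differentiableAt.hasDerivAt hpos.ne'

lemma mapsTo_leftBranch (hv0 : IsInverseBranch f v0 (Ioo 0 1) (Ioo 0 (1 / 2))) :
    MapsTo v0 (Ioo 0 1) (Ioo 0 1) :=
  hv0.mapsTo.mono_right (Ioo_subset_Ioo_right (by norm_num))

lemma boundedVariationOn_neg_log_deriv_leftBranch (hf : IsHolland γ ρ f)
    (hv0 : IsInverseBranch f v0 (Ioo 0 1) (Ioo 0 (1 / 2))) :
    BoundedVariationOn (fun x ↦ -Real.log (deriv f (v0 x))) (Ioo 0 1) := by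
  have hlog : BoundedVariationOn ((fun y ↦ Real.log (deriv f y)) ∘ v0) (Ioo 0 1) :=
    ne_top_of_le_ne_top hf.boundedVariationOn_log_deriv
      (eVariationOn.comp_le_of_monotoneOn _ v0 (hv0.strictMonoOn hf.strictMonoOn_left).monotoneOn
        hv0.mapsTo)
  exact (LipschitzWith.id.neg).comp_boundedVariationOn hlog

lemma exists_bvNorm_deriv_iterate_leftBranch_le (hf : IsHolland γ ρ f)
    (hv0 : IsInverseBranch f v0 (Ioo 0 1) (Ioo 0 (1 / 2))) :
    ∃ C ≠ ∞, ∀ k, bvNorm (deriv v0^[k]) (Ioo (1 / 2) 1) ≤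
      C * ENNReal.ofReal (v0^[k] (1 / 2) - v0^[k + 1] (1 / 2)) := by
  set g : ℝ → ℝ := fun x ↦ -Real.log (deriv f (v0 x))
  have hg : BoundedVariationOn g (Ioo 0 1) := hf.boundedVariationOn_neg_log_deriv_leftBranch hv0
  have hvmono := (hv0.strictMonoOn hf.strictMonoOn_left).monotoneOn
  have hvU := mapsTo_leftBranch hv0
  have hvg : ∀ x ∈ Ioo 0 1, HasDerivAt v0 (Real.exp (g x)) x :=
    fun x hx ↦ hf.hasDerivAt_leftBranch hv0 hx
  have hhalf := hv0.mapsTo (show (1 / 2 : ℝ) ∈ Ioo 0 1 by norm_num)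
  have hSU : Ico (1 / 2 : ℝ) 1 ⊆ Ioo 0 1 := Ico_subset_Ioo_left (by norm_num)
  have hS : ∀ x ∈ Ico (1 / 2 : ℝ) 1, ∀ y ∈ Ico (1 / 2 : ℝ) 1, v0 x ≤ y :=
    fun x hx y hy ↦ (hv0.mapsTo (hSU hx)).2.le.trans hy.1
  set c : ℝ := Real.exp (2 * (eVariationOn g (Ioo 0 1)).toReal) / (1 / 2 - v0 (1 / 2))
  refine ⟨ENNReal.ofReal c * (1 + eVariationOn g (Ioo 0 1)), by finiteness [hg], fun k ↦ ?_⟩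
  have hsup := fun x hx ↦ exp_birkhoffSum_le hvmono hvU hvg hg hhalf.2
    (Icc_subset_Ioo hhalf.1 (by norm_num)) hSU (left_mem_Ico.2 (by norm_num)) hS k (x := x) hx
  have hc : 0 ≤ c := div_nonneg (Real.exp_nonneg _) (sub_nonneg.2 hhalf.2.le)
  calc bvNorm (deriv v0^[k]) (Ioo (1 / 2) 1)
      = bvNorm (fun x ↦ Real.exp (birkhoffSum v0 g k x)) (Ioo (1 / 2) 1) :=
        bvNorm_congr fun x hx ↦ (hasDerivAt_iterate_exp_birkhoffSum hvU hvg k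
          (hSU (Ioo_subset_Ico_self hx))).deriv
    _ ≤ bvNorm (fun x ↦ Real.exp (birkhoffSum v0 g k x)) (Ico (1 / 2) 1) :=
        bvNorm_mono _ Ioo_subset_Ico_self
    _ ≤ _ := bvNorm_exp_le hsup
    _ ≤ _ := by
        grw [eVariationOn_birkhoffSum_le g hvmono hvU hSU hS k, ENNReal.ofReal_mul hc,
          mul_right_comm]

lemma rightBranch_eq (hf : IsHolland γ ρ f)
    (hv1 : IsInverseBranch f v1 (Ioo 0 1) (Ioo (1 / 2) 1)) :
    EqOn v1 (fun x ↦ (x + 1) / 2) (Ioo 0 1) := fun x hx ↦ by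
  have hvx : f (v1 x) = x := hv1.rightInvOn hx
  rw [hf.eq_right _ (Ioo_subset_Ioc_self (hv1.mapsTo hx))] at hvx
  linarith

lemma hasDerivAt_rightBranch (hf : IsHolland γ ρ f)
    (hv1 : IsInverseBranch f v1 (Ioo 0 1) (Ioo (1 / 2) 1)) {x : ℝ} (hx : x ∈ Ioo 0 1) :
    HasDerivAt v1 (1 / 2) x :=
  (((hasDerivAt_id x).add_const 1).div_const 2).congr_of_eventuallyEq
    ((hf.rightBranch_eq hv1).eventuallyEq_of_mem (isOpen_Ioo.mem_nhds hx))

lemma hasDerivAt_rightBranch_comp_iterate (hf : IsHolland γ ρ f)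
    (hv0 : IsInverseBranch f v0 (Ioo 0 1) (Ioo 0 (1 / 2)))
    (hv1 : IsInverseBranch f v1 (Ioo 0 1) (Ioo (1 / 2) 1)) (k : ℕ) {x : ℝ} (hx : x ∈ Ioo 0 1) :
    HasDerivAt (fun y ↦ v1 (v0^[k] y)) (1 / 2 * deriv v0^[k] x) x := by
  have hvU := mapsTo_leftBranch hv0
  have hiter := hasDerivAt_iterate_exp_birkhoffSum hvU
    (fun y hy ↦ hf.hasDerivAt_leftBranch hv0 hy) k hx
  exact (hf.hasDerivAt_rightBranch hv1 (hvU.iterate k hx)).comp x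
    hiter.differentiableAt.hasDerivAt

lemma monotoneOn_rightBranch_comp_iterate (hf : IsHolland γ ρ f)
    (hv0 : IsInverseBranch f v0 (Ioo 0 1) (Ioo 0 (1 / 2)))
    (hv1 : IsInverseBranch f v1 (Ioo 0 1) (Ioo (1 / 2) 1)) (k : ℕ) :
    MonotoneOn (fun y ↦ v1 (v0^[k] y)) (Ioo 0 1) := by
  have hvU := mapsTo_leftBranch hv0
  have hiter : MonotoneOn v0^[k] (Ioo 0 1) :=
    monotoneOn_iterate (hv0.strictMonoOn hf.strictMonoOn_left).monotoneOn hvU k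
  intro x hx y hy hxy
  simp only [hf.rightBranch_eq hv1 (hvU.iterate k hx), hf.rightBranch_eq hv1 (hvU.iterate k hy)]
  gcongr
  exact hiter hx hy hxy

lemma exists_bvNorm_deriv_rightBranch_comp_iterate_le (hf : IsHolland γ ρ f)
    (hv0 : IsInverseBranch f v0 (Ioo 0 1) (Ioo 0 (1 / 2)))
    (hv1 : IsInverseBranch f v1 (Ioo 0 1) (Ioo (1 / 2) 1)) :
    ∃ C ≠ ∞, ∀ k, bvNorm (deriv fun y ↦ v1 (v0^[k] y)) (Ioo (1 / 2) 1) ≤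
      C * ENNReal.ofReal (v0^[k] (1 / 2) - v0^[k + 1] (1 / 2)) := by
  obtain ⟨C, hC, hbv⟩ := hf.exists_bvNorm_deriv_iterate_leftBranch_le hv0
  refine ⟨‖(1 / 2 : ℝ)‖ₑ * C, by finiteness, fun k ↦ ?_⟩
  have hderiv : EqOn (deriv fun y ↦ v1 (v0^[k] y)) (fun x ↦ 1 / 2 * deriv v0^[k] x)
      (Ioo (1 / 2) 1) := fun x hx ↦
    (hf.hasDerivAt_rightBranch_comp_iterate hv0 hv1 k
      (Ioo_subset_Ioo_left (by norm_num) hx)).deriv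
  grw [bvNorm_congr hderiv, bvNorm_mul_le, bvNorm_const_le, hbv k, mul_assoc]

lemma exists_eVariationOn_Lop_le {h : ℝ → ℝ} (hf : IsHolland γ ρ f)
    (hv0 : IsInverseBranch f v0 (Ioo 0 1) (Ioo 0 (1 / 2)))
    (hv1 : IsInverseBranch f v1 (Ioo 0 1) (Ioo (1 / 2) 1))
    (hBV : BoundedVariationOn h (Icc (1 / 2) 1)) {m : ℝ} (hm : 0 < m)
    (hmh : ∀ x ∈ Icc (1 / 2) 1, m ≤ h x) :
    ∃ C ≠ ∞, ∀ (k : ℕ) (φ : ℝ → ℝ), (∃ x₀, φ x₀ = 0) →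
      eVariationOn (Lop h v0 v1 (k + 1) φ) univ ≤
        C * ENNReal.ofReal (v0^[k] (1 / 2) - v0^[k + 1] (1 / 2)) * eVariationOn φ univ := by
  obtain ⟨C, hC, hbv⟩ := hf.exists_bvNorm_deriv_rightBranch_comp_iterate_le hv0 hv1
  refine ⟨16 * (bvNorm h (Icc (1 / 2) 1) * C * bvNorm (fun y ↦ (h y)⁻¹) (Icc (1 / 2) 1) * 2),
    by finiteness [bvNorm_ne_top hBV, bvNorm_inv_ne_top hm hmh hBV], ?_⟩
  rintro k φ ⟨x₀, hx₀⟩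
  have hsub : Ioo (1 / 2 : ℝ) 1 ⊆ Ioo 0 1 := Ioo_subset_Ioo_left (by norm_num)
  have hdiff : DifferentiableOn ℝ (fun y ↦ v1 (v0^[k] y)) (Ioo (1 / 2) 1) := fun x hx ↦
    (hf.hasDerivAt_rightBranch_comp_iterate hv0 hv1 k
      (hsub hx)).differentiableAt.differentiableWithinAt
  have hmaps : MapsTo (fun y ↦ v1 (v0^[k] y)) (Ioo (1 / 2) 1) (Icc (1 / 2) 1) := fun x hx ↦
    Ioo_subset_Icc_self (hv1.mapsTo ((mapsTo_leftBranch hv0).iterate k (hsub hx)))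
  calc eVariationOn (Lop h v0 v1 (k + 1) φ) univ
      ≤ bvNorm (Lop h v0 v1 (k + 1) φ) univ := le_add_self
    _ ≤ _ := bvNorm_indicator_weighted_comp_le h φ (by norm_num)
        ((hf.monotoneOn_rightBranch_comp_iterate hv0 hv1 k).mono hsub) hdiff hmaps
    _ ≤ _ := by
        grw [Nat.add_sub_cancel, hbv k, bvNorm_univ_le_two_mul_eVariationOn hx₀]
        exact (by ring : _ = _).le

end IsHolland

theorem statement15_general {γ : ℝ} {ρ f h v0 v1 : ℝ → ℝ} (hf : IsHolland γ ρ f)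
    (hBV : BoundedVariationOn h (Icc (1 / 2) 1)) {m : ℝ} (hm : 0 < m)
    (hmh : ∀ x ∈ Icc (1 / 2) 1, m ≤ h x)
    (hv0 : ∀ x ∈ Ioo (0 : ℝ) 1, v0 x ∈ Ioo (0 : ℝ) (1 / 2) ∧ f (v0 x) = x)
    (hv1 : ∀ x ∈ Ioo (0 : ℝ) 1, v1 x ∈ Ioo (1 / 2 : ℝ) 1 ∧ f (v1 x) = x)
    {z : ℕ → ℝ} (hz1 : z 1 = 1 / 2) (hzrec : ∀ n, 1 ≤ n → z (n + 1) = v0 (z n)) :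
    ∃ C > 0, ∀ n, 1 ≤ n → ∀ φ : ℝ → ℝ, (∃ x₀, φ x₀ = 0) →
      eVariationOn (Lop h v0 v1 n φ) univ ≤
        ENNReal.ofReal (C * (volume (Ioc (z (n + 1)) (z n))).toReal) * eVariationOn φ univ := by
  obtain ⟨C, hC, hLop⟩ := hf.exists_eVariationOn_Lop_le (h := h)
    ⟨fun x hx ↦ (hv0 x hx).1, fun x hx ↦ (hv0 x hx).2⟩
    ⟨fun x hx ↦ (hv1 x hx).1, fun x hx ↦ (hv1 x hx).2⟩ hBV hm hmh
  have hz (k : ℕ) : z (k + 1) = v0^[k] (1 / 2) := by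
    induction k with
    | zero => exact hz1
    | succ k ih => rw [hzrec (k + 1) (by lia), ih, Function.iterate_succ_apply']
  refine ⟨C.toReal + 1, by positivity, fun n hn φ hφ ↦ ?_⟩
  obtain ⟨k, rfl⟩ := Nat.exists_eq_add_of_le' hn
  grw [hLop k φ hφ, ENNReal.ofReal_mul (by positivity), ← le_add_of_nonneg_right zero_le_one,
    ENNReal.ofReal_toReal hC, ENNReal.ofReal_toReal measure_Ioc_lt_top.ne, Real.volume_Ioc,
    hz, hz]

theorem statement15
    (γ : ℝ) (ρ : ℝ → ℝ) (f : ℝ → ℝ) (hγ0 : 0 < γ) (hγ1 : γ < 1)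
    (hf : IsHolland γ ρ f)
    (ν : Measure ℝ) [IsProbabilityMeasure ν]
    (hν_inv : MeasurePreserving f ν ν)
    (h : ℝ → ℝ)
    (hdens : ν = (MeasureTheory.volume.restrict (Set.Icc (0:ℝ) 1)).withDensity
      (fun x => ENNReal.ofReal (h x)))
    (hpos : ∀ x ∈ Set.Ioc (0:ℝ) 1, 0 < h x)
    (hLip : ∀ ε : ℝ, 0 < ε → ∃ L : NNReal, LipschitzOnWith L h (Set.Icc ε 1))
    (v0 v1 : ℝ → ℝ)
    (hv0 : ∀ x ∈ Set.Ioo (0:ℝ) 1, v0 x ∈ Set.Ioo (0:ℝ) (1/2) ∧ f (v0 x) = x)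
    (hv1 : ∀ x ∈ Set.Ioo (0:ℝ) 1, v1 x ∈ Set.Ioo (1/2:ℝ) 1 ∧ f (v1 x) = x)
    (z : ℕ → ℝ) (hz0 : z 0 = 1) (hz1 : z 1 = 1/2)
    (hzrec : ∀ n : ℕ, 1 ≤ n → z (n + 1) = v0 (z n))
    (s : ℝ → ℝ) (hs_pos : ∀ x : ℝ, 0 < s x) (hs : SlowlyVarying s)
    (hJ : ∃ C₀ : ℝ, 0 < C₀ ∧ ∀ n : ℕ, 1 ≤ n →
      (MeasureTheory.volume (Set.Ioc (z (n + 1)) (z n))).toReal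
        ≤ C₀ * (n : ℝ) ^ (-(1/γ) - 1) * s n) :
    ∃ C : ℝ, 0 < C ∧ ∀ n : ℕ, 1 ≤ n → ∀ φ : ℝ → ℝ,
      eVariationOn φ Set.univ < ⊤ → (∀ x : ℝ, x ∉ Set.Icc (0:ℝ) 1 → φ x = 0) →
      eVariationOn (Lop h v0 v1 n φ) Set.univ
        ≤ ENNReal.ofReal (C * (n : ℝ) ^ (-(1/γ) - 1) * s n) * eVariationOn φ Set.univ := by
  obtain ⟨L, hL⟩ := hLip (1 / 2) (by norm_num)
  have hBV : BoundedVariationOn h (Icc (1 / 2) 1) :=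
    hL.comp_boundedVariationOn (g := id) (mapsTo_id _) (BoundedVariationOn.id_Icc _ _)
  obtain ⟨m, hm, hmh⟩ := isCompact_Icc.exists_forall_le' hL.continuousOn
    fun x hx ↦ hpos x ⟨one_half_pos.trans_le hx.1, hx.2⟩
  obtain ⟨C, hC, hLop⟩ := statement15_general hf hBV hm hmh hv0 hv1 hz1 hzrec
  obtain ⟨C₀, hC₀, hJ⟩ := hJ
  refine ⟨C * C₀, by positivity, fun n hn φ _ hφ ↦ ?_⟩
  grw [hLop n hn φ ⟨2, hφ 2 (by norm_num)⟩, hJ n hn, mul_assoc C, mul_assoc C, mul_assoc C₀]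
end

section
/- Let ν be a probability measure on [0,1] and let φ : ℝ → ℝ be a function of bounded variation supported on [0,1]. Then V(φ − ν(φ)) ≤ 3 ‖dφ‖, where ν(φ) = ∫φ dν, and the function φ − ν(φ) is understood as φ^{(0)} = φ − ν(φ) on [0,1] (extended by the same centering in the variation over ℝ restricted to [0,1]). -/
open MeasureTheory Filter Set Topology

/-!
Cut at the endpoints of `[a, b]`: the extension by zero of `f - ∫ f` has at most the variation of
`f` on `[a, b]`, plus one jump at each endpoint. The jump at `x` has size `‖f x - ∫ f‖`, and `∫ f`
lies in every closed ball around `f x` which contains `f '' [a, b]`; so each jump is at most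
the variation of `f` too.
-/

section EndpointJumps

variable {α E : Type*} [LinearOrder α] [PseudoEMetricSpace E] {f : α → E} {a b : α}

theorem eVariationOn_Iic_le_edist {c : E} (hf : ∀ x < a, f x = c) :
    eVariationOn f (Iic a) ≤ edist c (f a) := by
  -- On `Iic a`, `f` factors through the monotone map `x ↦ decide (a ≤ x)` into a two-point order.
  let jump : Bool → E := fun t => if t then f a else c
  have f_eq : EqOn f (jump ∘ fun x => decide (a ≤ x)) (Iic a) := by
    intro x (hx : x ≤ a)
    rcases hx.lt_or_eq with hxa | rfl
    · simp [jump, hxa.not_ge, hf x hxa]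
    · simp [jump]
  calc eVariationOn f (Iic a)
      = eVariationOn (jump ∘ fun x => decide (a ≤ x)) (Iic a) := eVariationOn.congr f_eq
    _ ≤ eVariationOn jump {false, true} := by
        refine eVariationOn.comp_le_of_monotoneOn jump _ ?_ fun x _ => by simp [lt_or_ge]
        intro x _ y _ hxy
        simpa [Bool.le_iff_imp] using fun hax : a ≤ x => hax.trans hxy
    _ = edist c (f a) := by simp [eVariationOn.pair, jump]

theorem eVariationOn_Ici_le_edist {c : E} (hf : ∀ x > a, f x = c) :
    eVariationOn f (Ici a) ≤ edist c (f a) := by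
  rw [← eVariationOn.comp_ofDual]
  exact eVariationOn_Iic_le_edist (f := f ∘ OrderDual.ofDual) (a := OrderDual.toDual a) hf

theorem eVariationOn_univ_eq_add (f : α → E) (hab : a ≤ b) :
    eVariationOn f univ =
      eVariationOn f (Iic a) + eVariationOn f (Icc a b) + eVariationOn f (Ici b) := by
  rw [← eVariationOn.union f isGreatest_Iic (isLeast_Icc hab), Iic_union_Icc_eq_Iic hab,
    ← eVariationOn.union f isGreatest_Iic isLeast_Ici, Iic_union_Ici]

theorem eVariationOn_indicator_Icc_le [Zero E] (f : α → E) (hab : a ≤ b) :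
    eVariationOn (indicator (Icc a b) f) univ ≤
      edist 0 (f a) + eVariationOn f (Icc a b) + edist 0 (f b) := by
  have on_Icc : EqOn (indicator (Icc a b) f) f (Icc a b) := fun _ hx => indicator_of_mem hx f
  rw [eVariationOn_univ_eq_add _ hab, eVariationOn.congr on_Icc]
  gcongr
  · rw [← on_Icc (left_mem_Icc.2 hab)]
    exact eVariationOn_Iic_le_edist fun x hx => indicator_of_notMem (fun h => hx.not_ge h.1) f
  · rw [← on_Icc (right_mem_Icc.2 hab)]
    exact eVariationOn_Ici_le_edist fun x hx => indicator_of_notMem (fun h => hx.not_ge h.2) f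

end EndpointJumps

theorem eVariationOn_sub_const {α E : Type*} [LinearOrder α] [SeminormedAddCommGroup E]
    (f : α → E) (c : E) (s : Set α) :
    eVariationOn (fun x => f x - c) s = eVariationOn f s := by
  simp only [eVariationOn, edist_sub_right]

theorem lipschitzOnWith_of_hasConstantSpeedOnWith {E : Type*} [PseudoEMetricSpace E]
    {f : ℝ → E} {s : Set ℝ} {l : NNReal} (hf : HasConstantSpeedOnWith f s l) :
    LipschitzOnWith l f s := by
  intro x hx y hy
  wlog hxy : x ≤ y generalizing x y
  · rw [edist_comm, edist_comm x]
    exact this hy hx (le_of_not_ge hxy)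
  calc edist (f x) (f y)
      ≤ eVariationOn f (s ∩ Icc x y) :=
        eVariationOn.edist_le f ⟨hx, left_mem_Icc.2 hxy⟩ ⟨hy, right_mem_Icc.2 hxy⟩
    _ = ENNReal.ofReal (l * (y - x)) := hf hx hy
    _ = l * edist x y := by
        rw [ENNReal.ofReal_mul l.coe_nonneg, ENNReal.ofReal_coe_nnreal, edist_comm, edist_dist,
          Real.dist_eq, abs_of_nonneg (sub_nonneg.2 hxy)]

section Integrability

variable {α E : Type*} [LinearOrder α] [TopologicalSpace α] [OrderClosedTopology α]
  [MeasurableSpace α] [BorelSpace α] {f : α → E} {s : Set α}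

/- Parametrizing by arc length writes `f` as a Lipschitz map composed with a monotone real
function, so the range of `f` is separable even when `E` is not. -/
theorem stronglyMeasurable_domRestrict_of_locallyBoundedVariationOn [EMetricSpace E]
    (hf : LocallyBoundedVariationOn f s) :
    StronglyMeasurable (s.domRestrict f) := by
  rcases s.eq_empty_or_nonempty with rfl | ⟨a, ha⟩
  · exact .of_discrete
  let arcLength := variationOnFromTo f s a
  let curve := naturalParameterization f s a
  have arcLength_measurable : Measurable (s.domRestrict arcLength) :=
    (monotoneOn_iff_monotone.1 (variationOnFromTo.monotoneOn hf ha)).measurable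
  have curve_continuous : Continuous ((arcLength '' s).domRestrict curve) :=
    (lipschitzOnWith_of_hasConstantSpeedOnWith
      (has_unit_speed_naturalParameterization f hf ha)).continuousOn.domRestrict
  have f_eq : s.domRestrict f = (arcLength '' s).domRestrict curve ∘
      fun x : s => ⟨arcLength x, mem_image_of_mem _ x.2⟩ :=
    funext fun x => (eq_of_edist_eq_zero (edist_naturalParameterization_eq_zero hf ha x.2)).symm
  rw [f_eq]
  exact curve_continuous.comp_stronglyMeasurable arcLength_measurable.subtype_mk.stronglyMeasurable

theorem aestronglyMeasurable_restrict_of_locallyBoundedVariationOn [EMetricSpace E]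
    {μ : Measure α} (hf : LocallyBoundedVariationOn f s) (hs : MeasurableSet s) :
    AEStronglyMeasurable f (μ.restrict s) := by
  rw [← map_comap_subtype_coe hs, (MeasurableEmbedding.subtype_coe hs).aestronglyMeasurable_map_iff]
  exact (stronglyMeasurable_domRestrict_of_locallyBoundedVariationOn hf).aestronglyMeasurable

theorem integrableOn_of_boundedVariationOn [NormedAddCommGroup E] {μ : Measure α}
    (hf : BoundedVariationOn f s) (hs : MeasurableSet s) (hμs : μ s < ⊤) :
    IntegrableOn f s μ := by
  rcases s.eq_empty_or_nonempty with rfl | ⟨a, ha⟩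
  · exact integrableOn_empty
  refine .of_bound hμs (aestronglyMeasurable_restrict_of_locallyBoundedVariationOn
    hf.locallyBoundedVariationOn hs) (‖f a‖ + (eVariationOn f s).toReal) ?_
  filter_upwards [ae_restrict_mem hs] with x hx
  calc ‖f x‖ ≤ ‖f a‖ + ‖f x - f a‖ := norm_le_insert' _ _
    _ ≤ ‖f a‖ + (eVariationOn f s).toReal := by
        gcongr
        simpa only [dist_eq_norm] using hf.dist_le hx ha

variable [NormedAddCommGroup E] [NormedSpace ℝ E] [CompleteSpace E]
  {ν : Measure α} [IsProbabilityMeasure ν]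

theorem edist_integral_le_eVariationOn (hf : BoundedVariationOn f s) (hs : MeasurableSet s)
    (hν : ∀ᵐ z ∂ν, z ∈ s) {x : α} (hx : x ∈ s) :
    edist (f x) (∫ z, f z ∂ν) ≤ eVariationOn f s := by
  have f_integrable : Integrable f ν := by
    simpa only [IntegrableOn, Measure.restrict_eq_self_of_ae_mem hν] using
      integrableOn_of_boundedVariationOn hf hs (measure_lt_top ν s)
  have integral_mem : ∫ z, f z ∂ν ∈ Metric.closedBall (f x) (eVariationOn f s).toReal := by
    refine (convex_closedBall _ _).integral_mem Metric.isClosed_closedBall ?_ f_integrable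
    filter_upwards [hν] with z hz using hf.dist_le hz hx
  rw [edist_comm, edist_dist]
  exact ENNReal.ofReal_le_of_le_toReal integral_mem

theorem statement18_general {a b : α} (hν : ∀ᵐ z ∂ν, z ∈ Icc a b)
    (hf : BoundedVariationOn f (Icc a b)) :
    eVariationOn (indicator (Icc a b) fun x => f x - ∫ z, f z ∂ν) univ ≤
      3 * eVariationOn f (Icc a b) := by
  have hab : a ≤ b := nonempty_Icc.1 hν.exists
  have jump_le {x : α} (hx : x ∈ Icc a b) :
      edist 0 (f x - ∫ z, f z ∂ν) ≤ eVariationOn f (Icc a b) := by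
    rw [edist_comm, edist_zero_right, ← edist_eq_enorm_sub]
    exact edist_integral_le_eVariationOn hf measurableSet_Icc hν hx
  calc _ ≤ edist 0 (f a - ∫ z, f z ∂ν) + eVariationOn (fun x => f x - ∫ z, f z ∂ν) (Icc a b) +
          edist 0 (f b - ∫ z, f z ∂ν) := eVariationOn_indicator_Icc_le _ hab
    _ ≤ eVariationOn f (Icc a b) + eVariationOn f (Icc a b) + eVariationOn f (Icc a b) := by
        rw [eVariationOn_sub_const]
        gcongr
        exacts [jump_le (left_mem_Icc.2 hab), jump_le (right_mem_Icc.2 hab)]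
    _ = 3 * eVariationOn f (Icc a b) := by ring

end Integrability

theorem statement18
    (ν : Measure ℝ) [IsProbabilityMeasure ν] (hν : ν (Set.Icc (0:ℝ) 1)ᶜ = 0)
    (φ : ℝ → ℝ) (hsupp : ∀ x : ℝ, x ∉ Set.Icc (0:ℝ) 1 → φ x = 0)
    (hBV : eVariationOn φ Set.univ < ⊤) :
    eVariationOn
        (Set.indicator (Set.Icc (0:ℝ) 1) (fun y => φ y - ∫ z, φ z ∂ν)) Set.univ
      ≤ 3 * eVariationOn φ (Set.Icc (0:ℝ) 1) :=
  statement18_general hν (BoundedVariationOn.mono hBV.ne (subset_univ _))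
end
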